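/- Let F: ℝ² → ℝ² be a global symplectomorphism (i.e., a smooth diffeomorphism with det(JF) = 1 everywhere) such that the Jacobian matrix JF has constant Frobenius norm. Then F is an affine map. -/

import Mathlib

/-!
With `F_z` and `F_z̄` the Wirtinger derivatives, `|F_z|² - |F_z̄|² = det JF = 1` and
`2 (|F_z|² + |F_z̄|²) = ‖JF‖²`, so both moduli `ρ > σ ≥ 0` are constant and, the plane being simply
connected, `F_z = ρ exp(iP)` and `F_z̄ = σ exp(iQ)` with smooth `P`, `Q` (`exists_smooth_angle`).
Put `θ = (Q - P) / 2`; the frame `e₁ = (cos θ, sin θ)`, `e₂ = (-sin θ, cos θ)` consists of the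
principal directions of `JF`. Equality of the mixed partials of `F` reads
`ρ e₁P = σ e₁Q` and `ρ e₂P = -σ e₂Q`.

If `σ = 0` this says that `P` is constant. If `σ > 0` it says `e₁P = m e₁θ`, `e₂P = -n e₂θ` with
`m, n > 0`. Writing `dθ = u ω₁ + v ω₂` in the dual coframe, the closedness of `dθ` and of
`dP = m u ω₁ - n v ω₂` makes both `u ω₁` and `v ω₂` closed, which is the pair of Riccati equations
`e₂u = u²`, `e₁v = -v²`. The integral curves of unit vector fields on the plane exist for all
time, while nonzero solutions of `y' = y²` blow up (`riccati_eq_zero`); hence `u = v = 0`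
(`frame_rigid`), the angles `θ`, `P` and `Q` are constant, and so is `JF`.
-/

noncomputable section

abbrev E2 := EuclideanSpace ℝ (Fin 2)

/-- The Jacobian matrix of `F : ℝ² → ℝ²` at `p`. -/
def Jac (F : E2 → E2) (p : E2) : Matrix (Fin 2) (Fin 2) ℝ :=
  fun i j => fderiv ℝ F p (EuclideanSpace.single j 1) i

open scoped ContDiff
open Set Metric

/-! ### Partial derivatives -/

/-- The partial derivative of a real-valued function in the `j`-th coordinate direction. -/
def partialD (j : Fin 2) (h : E2 → ℝ) (p : E2) : ℝ :=
  fderiv ℝ h p (EuclideanSpace.single j 1)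

theorem partialD_contDiff {h : E2 → ℝ} (hh : ContDiff ℝ ∞ h) (j : Fin 2) :
    ContDiff ℝ ∞ (partialD j h) := by
  have : ContDiff ℝ ∞ (fderiv ℝ h) := hh.fderiv_right (by simp)
  unfold partialD
  exact this.clm_apply contDiff_const

theorem partialD_comm {h : E2 → ℝ} (hh : ContDiff ℝ ∞ h) (p : E2) :
    partialD 1 (partialD 0 h) p = partialD 0 (partialD 1 h) p := by
  have h1 : DifferentiableAt ℝ (fderiv ℝ h) p :=
    (hh.fderiv_right (m := ∞) (by simp)).differentiable (by simp) p
  have hs : IsSymmSndFDerivAt ℝ h p :=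
    (contDiff_infty.1 hh 2).contDiffAt.isSymmSndFDerivAt (by simp)
  have key : ∀ i j : Fin 2, partialD i (partialD j h) p =
      fderiv ℝ (fderiv ℝ h) p (EuclideanSpace.single i 1) (EuclideanSpace.single j 1) := by
    intro i j
    have := (h1.hasFDerivAt.clm_apply
      (hasFDerivAt_const (EuclideanSpace.single j (1 : ℝ)) p)).fderiv
    change fderiv ℝ (fun q => fderiv ℝ h q (EuclideanSpace.single j 1)) p _ = _
    rw [this]
    simp
  rw [key, key, hs.eq]

theorem fderiv_apply_eq (h : E2 → ℝ) (p v : E2) :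
    fderiv ℝ h p v = v 0 * partialD 0 h p + v 1 * partialD 1 h p := by
  have hv : v = v 0 • EuclideanSpace.single 0 (1 : ℝ) + v 1 • EuclideanSpace.single 1 (1 : ℝ) := by
    ext i; fin_cases i <;> simp
  conv_lhs => rw [hv]
  simp [partialD]

theorem fderiv_eq_zero_of_partialD {h : E2 → ℝ} (h0 : ∀ p, partialD 0 h p = 0)
    (h1 : ∀ p, partialD 1 h p = 0) (p : E2) : fderiv ℝ h p = 0 := by
  ext v
  rw [fderiv_apply_eq, h0, h1]
  simp

theorem eq_of_partialD_eq_zero {h : E2 → ℝ} (hh : ContDiff ℝ ∞ h)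
    (h0 : ∀ p, partialD 0 h p = 0) (h1 : ∀ p, partialD 1 h p = 0) (p q : E2) : h p = h q :=
  is_const_of_fderiv_eq_zero (hh.differentiable (by simp))
    (fderiv_eq_zero_of_partialD h0 h1) p q

/-- The product rule for the coordinates, in the standard basis, of a vector or covector written in
the rotating frame of angle `θ`. -/
theorem partialD_frame {u v θ : E2 → ℝ} (hu : ContDiff ℝ ∞ u) (hv : ContDiff ℝ ∞ v)
    (hθ : ContDiff ℝ ∞ θ) (a b : ℝ) (j : Fin 2) (p : E2) :
    partialD j (fun q => a * (u q * Real.cos (θ q)) + b * (v q * Real.sin (θ q))) p =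
      a * (partialD j u p * Real.cos (θ p) - u p * Real.sin (θ p) * partialD j θ p) +
      b * (partialD j v p * Real.sin (θ p) + v p * Real.cos (θ p) * partialD j θ p) := by
  have hu' := (hu.differentiable (by simp) p).hasFDerivAt
  have hv' := (hv.differentiable (by simp) p).hasFDerivAt
  have hθ' := (hθ.differentiable (by simp) p).hasFDerivAt
  unfold partialD
  rw [HasFDerivAt.fderiv (((hu'.fun_mul hθ'.cos).const_mul a).fun_add
    ((hv'.fun_mul hθ'.sin).const_mul b))]
  simp
  ring

theorem partialD_cos_add_cos {P Q : E2 → ℝ} (hP : ContDiff ℝ ∞ P) (hQ : ContDiff ℝ ∞ Q)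
    (a b : ℝ) (j : Fin 2) (p : E2) :
    partialD j (fun q => a * Real.cos (P q) + b * Real.cos (Q q)) p =
      -(a * Real.sin (P p) * partialD j P p) - b * Real.sin (Q p) * partialD j Q p := by
  have hP' := (hP.differentiable (by simp) p).hasFDerivAt
  have hQ' := (hQ.differentiable (by simp) p).hasFDerivAt
  unfold partialD
  rw [HasFDerivAt.fderiv ((hP'.cos.const_mul a).fun_add (hQ'.cos.const_mul b))]
  simp
  ring

theorem partialD_sin_add_sin {P Q : E2 → ℝ} (hP : ContDiff ℝ ∞ P) (hQ : ContDiff ℝ ∞ Q)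
    (a b : ℝ) (j : Fin 2) (p : E2) :
    partialD j (fun q => a * Real.sin (P q) + b * Real.sin (Q q)) p =
      a * Real.cos (P p) * partialD j P p + b * Real.cos (Q p) * partialD j Q p := by
  have hP' := (hP.differentiable (by simp) p).hasFDerivAt
  have hQ' := (hQ.differentiable (by simp) p).hasFDerivAt
  unfold partialD
  rw [HasFDerivAt.fderiv ((hP'.sin.const_mul a).fun_add (hQ'.sin.const_mul b))]
  simp
  ring

/-! ### Smooth polar angles -/

/-- A smooth field of planar vectors of constant length has a smooth polar angle: the continuous
angle comes from lifting through the covering `Complex.exp`, and it is smooth because it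
locally differs from a branch of the logarithm by a constant. -/
theorem exists_smooth_angle {a b : E2 → ℝ} (ha : ContDiff ℝ ∞ a) (hb : ContDiff ℝ ∞ b)
    {r : ℝ} (hr : 0 ≤ r) (hab : ∀ p, a p ^ 2 + b p ^ 2 = r ^ 2) :
    ∃ P : E2 → ℝ, ContDiff ℝ ∞ P ∧ ∀ p, a p = r * Real.cos (P p) ∧ b p = r * Real.sin (P p) := by
  rcases hr.eq_or_lt with rfl | hr
  · refine ⟨fun _ => 0, contDiff_const, fun p => ?_⟩
    have := hab p
    constructor <;> nlinarith [sq_nonneg (a p), sq_nonneg (b p)]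
  set g : E2 → ℂ := fun p => Complex.equivRealProdCLM.symm (a p, b p) with hg
  have hgre : ∀ p, (g p).re = a p := fun p => by simp [hg]
  have hgim : ∀ p, (g p).im = b p := fun p => by simp [hg]
  have hgs : ContDiff ℝ ∞ g :=
    Complex.equivRealProdCLM.symm.contDiff.comp (ha.prodMk hb)
  have hg0 : ∀ p, g p ≠ 0 := by
    intro p h0
    have h1 := hab p
    rw [← hgre, ← hgim, h0] at h1
    simp only [Complex.zero_re, Complex.zero_im] at h1
    nlinarith [pow_pos hr 2]
  obtain ⟨l, ⟨-, hl⟩, -⟩ := Complex.isCoveringMapOn_exp.existsUnique_continuousMap_lifts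
    ⟨g, hgs.continuous⟩ (a₀ := (0 : E2)) (Complex.exp_log (hg0 0)) (fun p => hg0 p)
  have hexp : ∀ p, Complex.exp (l p) = g p := fun p => congrFun hl p
  have hls : ContDiff ℝ ∞ l := by
    rw [contDiff_iff_contDiffAt]
    intro p
    have hev : ∀ᶠ q in nhds p, l q = l p + Complex.log (g q / g p) := by
      have hc : ContinuousAt (fun q => (l q - l p).im) p := by fun_prop
      have hm : Ioo (-Real.pi) Real.pi ∈ nhds ((fun q => (l q - l p).im) p) := by
        simpa using Ioo_mem_nhds (neg_lt_zero.2 Real.pi_pos) Real.pi_pos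
      filter_upwards [hc.eventually_mem hm] with q hq
      rw [← hexp, ← hexp, ← Complex.exp_sub, Complex.log_exp hq.1 hq.2.le]
      ring
    refine ContDiffAt.congr_of_eventuallyEq ?_ hev
    have hlog : ContDiffAt ℝ ∞ Complex.log (g p / g p) := by
      rw [div_self (hg0 p)]
      exact (Complex.contDiffAt_log Complex.one_mem_slitPlane).restrict_scalars ℝ
    have hcomp := hlog.comp (f := fun q => g q / g p) p (hgs.contDiffAt.div_const _)
    exact contDiffAt_const.add hcomp
  refine ⟨fun p => (l p).im, Complex.imCLM.contDiff.comp hls, fun p => ?_⟩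
  have hnorm : Real.exp (l p).re = r := by
    have h1 := hab p
    rw [← hgre, ← hgim, ← hexp, Complex.exp_re, Complex.exp_im] at h1
    have h2 : Real.exp (l p).re ^ 2 = r ^ 2 := by
      linear_combination h1 - Real.exp (l p).re ^ 2 * Real.sin_sq_add_cos_sq (l p).im
    exact (sq_eq_sq₀ (Real.exp_pos _).le hr.le).1 h2
  rw [← hgre, ← hgim, ← hexp, Complex.exp_re, Complex.exp_im, hnorm]
  exact ⟨rfl, rfl⟩

/-! ### Riccati equations along complete vector fields -/

/-- A function satisfying the Riccati equation `y' = y²` along the integral curves of a smooth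
vector field of length at most one cannot be positive anywhere: it would blow up at time
`1 / y(0)`, while the curve exists up to any prescribed time, since it stays in a fixed ball. -/
theorem riccati_nonpos {e : E2 → E2} {u : E2 → ℝ} (he : ContDiff ℝ ∞ e) (hu : ContDiff ℝ ∞ u)
    (hbd : ∀ p, ‖e p‖ ≤ 1) (hric : ∀ p, fderiv ℝ u p (e p) = u p ^ 2) (p : E2) : u p ≤ 0 := by
  by_contra! hpos
  set T : ℝ := 1 / u p with hT
  have hTpos : 0 < T := by positivity
  obtain ⟨K, hK⟩ := he.contDiffOn.exists_lipschitzOnWith (by simp)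
    (convex_closedBall p T) (isCompact_closedBall p T)
  have h0 : (0 : ℝ) ∈ Icc 0 T := ⟨le_rfl, hTpos.le⟩
  have hPL : IsPicardLindelof (fun _ => e) (⟨0, h0⟩ : Icc (0 : ℝ) T) p T.toNNReal 0 1 K :=
    { lipschitzOnWith := fun t _ => by rwa [Real.coe_toNNReal _ hTpos.le]
      continuousOn := fun x _ => continuousOn_const
      norm_le := fun t _ x _ => by simpa using hbd x
      mul_max_le := by simp [hTpos.le] }
  obtain ⟨α, hα0, hα⟩ := hPL.exists_eq_forall_mem_Icc_hasDerivWithinAt₀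
  simp only at hα0
  have hy : ∀ t ∈ Icc 0 T, HasDerivWithinAt (fun s => u (α s)) (u (α t) ^ 2) (Icc 0 T) t := by
    intro t ht
    have := ((hu.differentiable (by simp) (α t)).hasFDerivAt).comp_hasDerivWithinAt t (hα t ht)
    rwa [hric] at this
  have hmono : MonotoneOn (fun s => u (α s)) (Icc 0 T) := by
    refine monotoneOn_of_hasDerivWithinAt_nonneg (f' := fun t => u (α t) ^ 2) (convex_Icc 0 T)
      (fun t ht => (hy t ht).continuousWithinAt) ?_ (fun t _ => sq_nonneg _)
    intro t ht
    exact (hy t (interior_subset ht)).mono interior_subset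
  have hge : ∀ t ∈ Icc 0 T, 0 < u (α t) := by
    intro t ht
    have := hmono h0 ht ht.1
    simp only [hα0] at this
    linarith
  have hz : ∀ t ∈ Icc 0 T,
      HasDerivWithinAt (fun s => (u (α s))⁻¹ + s) 0 (Icc 0 T) t := by
    intro t ht
    have hne := (hge t ht).ne'
    have := ((hy t ht).fun_inv hne).fun_add (hasDerivWithinAt_id t (Icc 0 T))
    rwa [neg_div, div_self (pow_ne_zero 2 hne), neg_add_cancel] at this
  have hconst := constant_of_has_deriv_right_zero
    (fun t ht => (hz t ht).continuousWithinAt)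
    (fun t ht => (hz t ⟨ht.1, ht.2.le⟩).mono_of_mem_nhdsWithin
      (Icc_mem_nhdsGE_of_mem ht)) T ⟨hTpos.le, le_rfl⟩
  have hlast := inv_pos.2 (hge T ⟨hTpos.le, le_rfl⟩)
  simp only [hα0, hT] at hconst hlast
  rw [one_div] at hconst hlast
  linarith

theorem riccati_eq_zero {e : E2 → E2} {u : E2 → ℝ} (he : ContDiff ℝ ∞ e) (hu : ContDiff ℝ ∞ u)
    (hbd : ∀ p, ‖e p‖ ≤ 1) (hric : ∀ p, fderiv ℝ u p (e p) = u p ^ 2) (p : E2) : u p = 0 := by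
  refine le_antisymm (riccati_nonpos he hu hbd hric p) ?_
  have := riccati_nonpos (e := fun q => -e q) (u := fun q => -u q) he.neg hu.neg
    (by simpa using hbd) (fun q => by rw [fderiv_fun_neg]; simpa using hric q) p
  linarith

/-! ### Rigidity of the principal frame -/

/-- If the differentials of `P` and `θ` are diagonally related, with distinct factors `m` and `-n`,
in the orthonormal frame `e₁ = (cos θ, sin θ)`, `e₂ = (-sin θ, cos θ)`, then `dθ = 0`.
Indeed both one-forms `u ω₁` and `v ω₂` are closed, where `dθ = u ω₁ + v ω₂`, and closedness
reads `e₂ u = u²` and `e₁ v = -v²`. -/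
theorem frame_rigid {P θ : E2 → ℝ} (hP : ContDiff ℝ ∞ P) (hθ : ContDiff ℝ ∞ θ) {m n : ℝ}
    (hmn : m + n ≠ 0)
    (h1 : ∀ p, Real.cos (θ p) * partialD 0 P p + Real.sin (θ p) * partialD 1 P p =
      m * (Real.cos (θ p) * partialD 0 θ p + Real.sin (θ p) * partialD 1 θ p))
    (h2 : ∀ p, -Real.sin (θ p) * partialD 0 P p + Real.cos (θ p) * partialD 1 P p =
      -n * (-Real.sin (θ p) * partialD 0 θ p + Real.cos (θ p) * partialD 1 θ p)) (p : E2) :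
    partialD 0 θ p = 0 ∧ partialD 1 θ p = 0 := by
  have hθ0 := partialD_contDiff hθ 0
  have hθ1 := partialD_contDiff hθ 1
  set u : E2 → ℝ := fun p => Real.cos (θ p) * partialD 0 θ p + Real.sin (θ p) * partialD 1 θ p
    with hu
  set v : E2 → ℝ := fun p => -Real.sin (θ p) * partialD 0 θ p + Real.cos (θ p) * partialD 1 θ p
    with hv
  have hus : ContDiff ℝ ∞ u := by fun_prop
  have hvs : ContDiff ℝ ∞ v := by fun_prop
  have eu : ∀ q, u q = Real.cos (θ q) * partialD 0 θ q + Real.sin (θ q) * partialD 1 θ q :=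
    fun q => rfl
  have ev : ∀ q, v q = -Real.sin (θ q) * partialD 0 θ q + Real.cos (θ q) * partialD 1 θ q :=
    fun q => rfl
  have cs : ∀ q, Real.sin (θ q) ^ 2 + Real.cos (θ q) ^ 2 = 1 := fun q => Real.sin_sq_add_cos_sq _
  have t0 : ∀ q, partialD 0 θ q = 1 * (u q * Real.cos (θ q)) + (-1) * (v q * Real.sin (θ q)) := by
    intro q
    linear_combination -(partialD 0 θ q) * cs q + (-Real.cos (θ q)) * eu q + Real.sin (θ q) * ev q
  have t1 : ∀ q, partialD 1 θ q = 1 * (v q * Real.cos (θ q)) + 1 * (u q * Real.sin (θ q)) := by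
    intro q
    linear_combination -(partialD 1 θ q) * cs q + (-Real.cos (θ q)) * ev q - Real.sin (θ q) * eu q
  have P0 : ∀ q, partialD 0 P q = m * (u q * Real.cos (θ q)) + n * (v q * Real.sin (θ q)) := by
    intro q
    linear_combination -(partialD 0 P q) * cs q + Real.cos (θ q) * h1 q - Real.sin (θ q) * h2 q
  have P1 : ∀ q, partialD 1 P q = (-n) * (v q * Real.cos (θ q)) + m * (u q * Real.sin (θ q)) := by
    intro q
    linear_combination -(partialD 1 P q) * cs q + Real.cos (θ q) * h2 q + Real.sin (θ q) * h1 q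
  have closed : ∀ q,
      (-Real.sin (θ q) * partialD 0 u q + Real.cos (θ q) * partialD 1 u q = u q ^ 2) ∧
      (Real.cos (θ q) * partialD 0 v q + Real.sin (θ q) * partialD 1 v q = -v q ^ 2) := by
    intro q
    have c1 := partialD_comm hθ q
    have c2 := partialD_comm hP q
    rw [funext t0, funext t1, partialD_frame hus hvs hθ, partialD_frame hvs hus hθ] at c1
    rw [funext P0, funext P1, partialD_frame hus hvs hθ, partialD_frame hvs hus hθ] at c2
    rw [eu q, ev q] at *
    constructor
    · apply mul_left_cancel₀ hmn
      linear_combination n * c1 + c2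
    · apply mul_left_cancel₀ hmn
      linear_combination c2 - m * c1
  have hu0 : ∀ q, u q = 0 := by
    refine riccati_eq_zero (e := fun q => !₂[-Real.sin (θ q), Real.cos (θ q)]) ?_ hus ?_ ?_
    · rw [contDiff_euclidean]
      intro i
      fin_cases i
      · simpa using hθ.sin.neg
      · simpa using hθ.cos
    · intro q
      simp [EuclideanSpace.norm_eq, Fin.sum_univ_two]
    · intro q
      rw [fderiv_apply_eq]
      simpa using (closed q).1
  have hv0 : ∀ q, -v q = 0 := by
    refine riccati_eq_zero (e := fun q => !₂[Real.cos (θ q), Real.sin (θ q)]) ?_ hvs.neg ?_ ?_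
    · rw [contDiff_euclidean]
      intro i
      fin_cases i
      · simpa using hθ.cos
      · simpa using hθ.sin
    · intro q
      simp [EuclideanSpace.norm_eq, Fin.sum_univ_two]
    · intro q
      rw [fderiv_fun_neg, neg_apply, fderiv_apply_eq]
      have := (closed q).2
      simp
      linarith
  have hv0' : v p = 0 := by linarith [hv0 p]
  rw [t0, t1, hu0, hv0']
  simp

/-- A global symplectomorphism of `ℝ²` (a smooth diffeomorphism with Jacobian
determinant `1`) whose Jacobian matrix has constant Frobenius norm is affine. -/
theorem symplectomorphism_constant_jacobian_norm_affine
    (F G : E2 → E2) (hF : ContDiff ℝ (⊤ : ℕ∞) F) (hG : ContDiff ℝ (⊤ : ℕ∞) G)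
    (hGF : Function.LeftInverse G F) (hFG : Function.RightInverse G F)
    (hsymp : ∀ p : E2, (Jac F p).det = 1)
    (c : ℝ) (hnorm : ∀ p : E2, ∑ i : Fin 2, ∑ j : Fin 2, (Jac F p i j) ^ 2 = c) :
    ∃ (L : E2 →ₗ[ℝ] E2) (b : E2), ∀ p : E2, F p = L p + b := by
  have hcomp : ∀ i, ContDiff ℝ ∞ (fun p => F p i) := contDiff_euclidean.1 hF
  have hJ : ∀ i j p, Jac F p i j = partialD j (fun q => F q i) p := by
    intro i j p
    have hd := (hF.differentiable (by simp) p).hasFDerivAt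
    have := ((EuclideanSpace.proj i : E2 →L[ℝ] ℝ).hasFDerivAt.comp p hd).fderiv
    unfold Jac partialD
    change _ = fderiv ℝ ((EuclideanSpace.proj i : E2 →L[ℝ] ℝ) ∘ F) p _
    rw [this]
    rfl
  set f : E2 → ℝ := fun p => F p 0 with hf
  set g : E2 → ℝ := fun p => F p 1 with hg
  have hfs : ContDiff ℝ ∞ f := hcomp 0
  have hgs : ContDiff ℝ ∞ g := hcomp 1
  have hf0 := partialD_contDiff hfs 0
  have hf1 := partialD_contDiff hfs 1
  have hg0 := partialD_contDiff hgs 0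
  have hg1 := partialD_contDiff hgs 1
  have hdet : ∀ p, partialD 0 f p * partialD 1 g p - partialD 1 f p * partialD 0 g p = 1 := by
    intro p
    have := hsymp p
    rwa [Matrix.det_fin_two, hJ, hJ, hJ, hJ] at this
  have hfro : ∀ p, partialD 0 f p ^ 2 + partialD 1 f p ^ 2 +
      (partialD 0 g p ^ 2 + partialD 1 g p ^ 2) = c := by
    intro p
    have := hnorm p
    simpa only [Fin.sum_univ_two, hJ] using this
  have hc : 2 ≤ c := by
    nlinarith [hdet 0, hfro 0, sq_nonneg (partialD 0 f 0 - partialD 1 g 0),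
      sq_nonneg (partialD 0 g 0 + partialD 1 f 0)]
  -- `ρ` and `σ` are the moduli of the Wirtinger derivatives `F_z` and `F_z̄`.
  set ρ : ℝ := √((c + 2) / 4) with hρ
  set σ : ℝ := √((c - 2) / 4) with hσ
  have hρ2 : ρ ^ 2 = (c + 2) / 4 := Real.sq_sqrt (by linarith)
  have hσ2 : σ ^ 2 = (c - 2) / 4 := Real.sq_sqrt (by linarith)
  have hρ0 : 0 < ρ := Real.sqrt_pos.2 (by linarith)
  have hσ0 : 0 ≤ σ := Real.sqrt_nonneg _
  have hσρ : σ < ρ := Real.sqrt_lt_sqrt (by linarith) (by linarith)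
  obtain ⟨P, hP, hPe⟩ := exists_smooth_angle
    (a := fun p => (partialD 0 f p + partialD 1 g p) / 2)
    (b := fun p => (partialD 0 g p - partialD 1 f p) / 2) (by fun_prop) (by fun_prop) hρ0.le
    (fun p => by rw [hρ2]; linear_combination (hfro p) / 4 + (hdet p) / 2)
  obtain ⟨Q, hQ, hQe⟩ := exists_smooth_angle
    (a := fun p => (partialD 0 f p - partialD 1 g p) / 2)
    (b := fun p => (partialD 0 g p + partialD 1 f p) / 2) (by fun_prop) (by fun_prop) hσ0
    (fun p => by rw [hσ2]; linear_combination (hfro p) / 4 - (hdet p) / 2)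
  have ef0 : ∀ p, partialD 0 f p = ρ * Real.cos (P p) + σ * Real.cos (Q p) := fun p => by
    linear_combination (hPe p).1 + (hQe p).1
  have eg1 : ∀ p, partialD 1 g p = ρ * Real.cos (P p) + (-σ) * Real.cos (Q p) := fun p => by
    linear_combination (hPe p).1 - (hQe p).1
  have eg0 : ∀ p, partialD 0 g p = ρ * Real.sin (P p) + σ * Real.sin (Q p) := fun p => by
    linear_combination (hPe p).2 + (hQe p).2
  have ef1 : ∀ p, partialD 1 f p = (-ρ) * Real.sin (P p) + σ * Real.sin (Q p) := fun p => by
    linear_combination (hQe p).2 - (hPe p).2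
  suffices hconst : ∀ p, (partialD 0 P p = 0 ∧ partialD 1 P p = 0) ∧
      (σ = 0 ∨ (partialD 0 Q p = 0 ∧ partialD 1 Q p = 0)) by
    have hPc : ∀ p, P p = P 0 := fun p =>
      eq_of_partialD_eq_zero hP (fun q => (hconst q).1.1) (fun q => (hconst q).1.2) p 0
    have hQc : σ = 0 ∨ ∀ p, Q p = Q 0 := by
      by_cases h : σ = 0
      · exact Or.inl h
      · exact Or.inr fun p => eq_of_partialD_eq_zero hQ
          (fun q => ((hconst q).2.resolve_left h).1) (fun q => ((hconst q).2.resolve_left h).2) p 0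
    have hJc : ∀ i j p, Jac F p i j = Jac F 0 i j := by
      intro i j p
      rw [hJ, hJ]
      fin_cases i <;> fin_cases j
      · change partialD 0 f p = partialD 0 f 0
        rw [ef0, ef0, hPc p]; rcases hQc with h | h
        · simp [h]
        · rw [h p]
      · change partialD 1 f p = partialD 1 f 0
        rw [ef1, ef1, hPc p]; rcases hQc with h | h
        · simp [h]
        · rw [h p]
      · change partialD 0 g p = partialD 0 g 0
        rw [eg0, eg0, hPc p]; rcases hQc with h | h
        · simp [h]
        · rw [h p]
      · change partialD 1 g p = partialD 1 g 0
        rw [eg1, eg1, hPc p]; rcases hQc with h | h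
        · simp [h]
        · rw [h p]
    have hfd : ∀ p, fderiv ℝ F p = fderiv ℝ F 0 := by
      intro p
      ext v i
      have hv : v = v 0 • EuclideanSpace.single 0 (1 : ℝ) +
          v 1 • EuclideanSpace.single 1 (1 : ℝ) := by
        ext i; fin_cases i <;> simp
      have k0 := hJc i 0 p
      have k1 := hJc i 1 p
      unfold Jac at k0 k1
      rw [hv]
      simp only [map_add, map_smul, PiLp.add_apply, PiLp.smul_apply, k0, k1]
    have hdF : Differentiable ℝ F := hF.differentiable (by simp)
    refine ⟨(fderiv ℝ F 0 : E2 →L[ℝ] E2), F 0, fun p => ?_⟩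
    have hz := is_const_of_fderiv_eq_zero (f := fun p => F p - fderiv ℝ F 0 p)
      (hdF.sub (fderiv ℝ F 0).differentiable) (fun q => by
        rw [fderiv_fun_sub (hdF q) (fderiv ℝ F 0).differentiableAt, hfd q,
          ContinuousLinearMap.fderiv, sub_self]) p 0
    simp only [map_zero, sub_zero] at hz
    rw [← hz]
    simp
  -- `2φ = P + Q` and `2θ = Q - P`, so that `JF = R(φ) diag(ρ + σ, ρ - σ) R(-θ)`.
  set θ : E2 → ℝ := fun p => 1 / 2 * Q p + (-1 / 2) * P p with hθ
  have hθs : ContDiff ℝ ∞ θ := by fun_prop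
  have hθD : ∀ j p, partialD j θ p = 1 / 2 * partialD j Q p + (-1 / 2) * partialD j P p := by
    intro j p
    have hP' := (hP.differentiable (by simp) p).hasFDerivAt
    have hQ' := (hQ.differentiable (by simp) p).hasFDerivAt
    unfold partialD
    rw [HasFDerivAt.fderiv ((hQ'.const_mul (1 / 2)).fun_add (hP'.const_mul (-1 / 2)))]
    simp
  -- Equality of mixed partials of `f` and `g`, resolved in the frame.
  have hframe : ∀ p,
      ρ * (Real.cos (θ p) * partialD 0 P p + Real.sin (θ p) * partialD 1 P p) =
        σ * (Real.cos (θ p) * partialD 0 Q p + Real.sin (θ p) * partialD 1 Q p) ∧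
      ρ * (-Real.sin (θ p) * partialD 0 P p + Real.cos (θ p) * partialD 1 P p) =
        -σ * (-Real.sin (θ p) * partialD 0 Q p + Real.cos (θ p) * partialD 1 Q p) := by
    intro p
    have c1 := partialD_comm hfs p
    have c2 := partialD_comm hgs p
    rw [funext ef0, funext ef1, partialD_cos_add_cos hP hQ, partialD_sin_add_sin hP hQ] at c1
    rw [funext eg0, funext eg1, partialD_cos_add_cos hP hQ, partialD_sin_add_sin hP hQ] at c2
    have e1 : P p = (P p + Q p) / 2 - θ p := by rw [hθ]; ring
    have e2 : Q p = (P p + Q p) / 2 + θ p := by rw [hθ]; ring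
    generalize (P p + Q p) / 2 = φ at e1 e2
    rw [e1, e2] at c1 c2
    simp only [Real.cos_add, Real.cos_sub, Real.sin_add, Real.sin_sub] at c1 c2
    have hcs := Real.sin_sq_add_cos_sq φ
    constructor
    · linear_combination Real.cos φ * c1 + Real.sin φ * c2 -
        (ρ * (Real.cos (θ p) * partialD 0 P p + Real.sin (θ p) * partialD 1 P p) -
        σ * (Real.cos (θ p) * partialD 0 Q p + Real.sin (θ p) * partialD 1 Q p)) * hcs
    · linear_combination Real.cos φ * c2 - Real.sin φ * c1 -
        (ρ * (-Real.sin (θ p) * partialD 0 P p + Real.cos (θ p) * partialD 1 P p) +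
        σ * (-Real.sin (θ p) * partialD 0 Q p + Real.cos (θ p) * partialD 1 Q p)) * hcs
  by_cases hσz : σ = 0
  · refine fun p => ⟨?_, Or.inl hσz⟩
    obtain ⟨k1, k2⟩ := hframe p
    rw [hσz] at k1 k2
    simp only [zero_mul, neg_zero, mul_eq_zero, hρ0.ne', false_or] at k1 k2
    have hcs := Real.sin_sq_add_cos_sq (θ p)
    constructor
    · linear_combination -(partialD 0 P p) * hcs + Real.cos (θ p) * k1 - Real.sin (θ p) * k2
    · linear_combination -(partialD 1 P p) * hcs + Real.cos (θ p) * k2 + Real.sin (θ p) * k1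
  · have hσp : 0 < σ := lt_of_le_of_ne hσ0 (Ne.symm hσz)
    have hd1 : ρ - σ ≠ 0 := by linarith
    have hd2 : ρ + σ ≠ 0 := by linarith
    have hm : 0 < 2 * σ / (ρ - σ) := div_pos (by linarith) (by linarith)
    have hn : 0 < 2 * σ / (ρ + σ) := by positivity
    have hr1 : ∀ p, Real.cos (θ p) * partialD 0 P p + Real.sin (θ p) * partialD 1 P p =
        2 * σ / (ρ - σ) *
          (Real.cos (θ p) * partialD 0 θ p + Real.sin (θ p) * partialD 1 θ p) := by
      intro p
      rw [hθD, hθD, div_mul_eq_mul_div, eq_div_iff hd1]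
      linear_combination (hframe p).1
    have hr2 : ∀ p, -Real.sin (θ p) * partialD 0 P p + Real.cos (θ p) * partialD 1 P p =
        -(2 * σ / (ρ + σ)) *
          (-Real.sin (θ p) * partialD 0 θ p + Real.cos (θ p) * partialD 1 θ p) := by
      intro p
      have hk := div_mul_cancel₀ (2 * σ) hd2
      apply mul_left_cancel₀ hd2
      linear_combination (hframe p).2 + (-Real.sin (θ p) * partialD 0 θ p +
        Real.cos (θ p) * partialD 1 θ p) * hk + 2 * σ * (-Real.sin (θ p) * hθD 0 p +
        Real.cos (θ p) * hθD 1 p)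
    intro p
    obtain ⟨z0, z1⟩ := frame_rigid hP hθs (by positivity) hr1 hr2 p
    have k1 := hr1 p
    have k2 := hr2 p
    rw [z0, z1] at k1 k2
    simp only [mul_zero, add_zero] at k1 k2
    have hcs := Real.sin_sq_add_cos_sq (θ p)
    have hP0 : partialD 0 P p = 0 := by
      linear_combination -(partialD 0 P p) * hcs + Real.cos (θ p) * k1 - Real.sin (θ p) * k2
    have hP1 : partialD 1 P p = 0 := by
      linear_combination -(partialD 1 P p) * hcs + Real.cos (θ p) * k2 + Real.sin (θ p) * k1
    rw [hθD, hP0] at z0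
    rw [hθD, hP1] at z1
    exact ⟨⟨hP0, hP1⟩, Or.inr ⟨by linarith, by linarith⟩⟩
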